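/- arXiv:2201.04315 — 2 statements merged into one kernel-verified Lean document; each statement's English description precedes it below -/
import Mathlib

section
/- Two claims about the product Poisson model. (i) There is an absolute constant c > 0 such that for every integer n ≥ 3 there exists λ > 0 with E[ min( χ²( Poi(λ̂_n) ‖ Poi(λ) ), n ) ] ≥ c / log n, where λ̂_n = (1/n)Σ_{i=1}^n X_i and X_1,…,X_n are i.i.d. Poi(λ); in particular this expectation is not O(1/n). (ii) Let n be even, let X_1,…,X_n be i.i.d. from ∏_{j=1}^d Poi(λ_j) on ℕ^d with λ_j > 0, let λ̂_j = (2/n)Σ_{i=1}^{n/2} X_{i,j}, let T = Σ_{i=n/2+1}^{n} X_i, and conditionally on (X_1,…,X_{n/2}) let Z ∼ ∏_{j=1}^d Poi(m·λ̂_j) be independent of T; set T̂ = T + Z. Then for every integer m ≥ 0, E_{(X_1,…,X_{n/2})}[ ‖ ℒ(T̂ | X_1,…,X_{n/2}) − ∏_{j=1}^d Poi((n/2 + m)λ_j) ‖_TV ] ≤ m√(2d)/n. -/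
open MeasureTheory ProbabilityTheory
open scoped ENNReal NNReal BigOperators

/-- Total variation distance between two measures: `sup_A |P(A) - Q(A)|`. -/
noncomputable def tvDist {X : Type*} [MeasurableSpace X] (μ ν : Measure X) : ℝ :=
  ⨆ A : {s : Set X // MeasurableSet s}, |(μ A).toReal - (ν A).toReal|

/-- A sum of `N` i.i.d. `Poi(r)` variables is `Poi(N r)`. -/
theorem map_sum_pi_poissonMeasure (N : ℕ) (r : ℝ≥0) :
    (Measure.pi fun _ : Fin N => poissonMeasure r).map (fun x => ∑ i, x i) =
      poissonMeasure (N * r) := by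
  set P := Measure.pi fun _ : Fin N => poissonMeasure r
  have hlaw (i : Fin N) : HasLaw (fun x : Fin N → ℕ => x i) (poissonMeasure r) P :=
    ⟨(measurable_pi_apply i).aemeasurable, (measurePreserving_eval _ i).map_eq⟩
  have hind : iIndepFun (fun (i : Fin N) (x : Fin N → ℕ) => x i) P :=
    iIndepFun_pi (X := fun _ => id) fun _ => aemeasurable_id
  have key (s : Finset (Fin N)) :
      HasLaw (∑ i ∈ s, fun x : Fin N → ℕ => x i) (poissonMeasure (s.card * r)) P := by
    induction s using Finset.induction_on with
    | empty =>
      refine ⟨by fun_prop, ?_⟩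
      have h0 : (poissonMeasure (((∅ : Finset (Fin N)).card : ℝ≥0) * r)) = Measure.dirac 0 := by
        refine Measure.ext_of_singleton fun n => ?_
        rw [poissonMeasure_singleton]
        rcases n with _ | n <;> simp
      rw [h0]
      simp [Pi.zero_def]
    | insert a s ha ih =>
      rw [Finset.sum_insert ha, Finset.card_insert_of_notMem ha]
      have := IndepFun.hasLaw_add_poissonMeasure
        (hind.indepFun_finsetSum_of_notMem (fun i => measurable_pi_apply i) ha).symm (hlaw a) ih
      convert this using 2
      push_cast
      ring
  have h := (key Finset.univ).map_eq
  simp only [Finset.card_univ, Fintype.card_fin] at h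
  rw [← h]
  congr 1
  ext x
  simp

theorem hasSum_poisson_weight_nat_mul (r : ℝ) {g : ℕ → ℝ} {s : ℝ}
    (h : HasSum (fun n => Real.exp (-r) * r ^ n / n.factorial * g (n + 1)) s) :
    HasSum (fun n => Real.exp (-r) * r ^ n / n.factorial * (n * g n)) (r * s) := by
  refine (hasSum_nat_add_iff' 1).1 ?_
  convert! h.mul_left r using 1
  · ext n
    rw [Nat.factorial_succ]
    push_cast
    field_simp
    ring
  · simp

theorem hasSum_poisson_variance (r : ℝ≥0) :
    HasSum (fun n : ℕ => Real.exp (-r) * r ^ n / n.factorial * ((n : ℝ) - r) ^ 2) r := by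
  have h0 := hasSum_one_poissonMeasure r
  have h1 := hasSum_poisson_weight_nat_mul r (g := fun _ => 1) (by simpa using h0)
  have h2 := hasSum_poisson_weight_nat_mul r (g := fun n => n) (s := r + 1) (by
    convert! h1.add h0 using 1
    · ext n; push_cast; ring
    · ring)
  convert! (h2.add (h0.mul_left ((r : ℝ) ^ 2))).sub (h1.mul_left (2 * (r : ℝ))) using 1
  · ext n; ring
  · ring

theorem integrable_sq_sub_poissonMeasure (r : ℝ≥0) :
    Integrable (fun n : ℕ => ((n : ℝ) - r) ^ 2) (poissonMeasure r) := by
  rw [integrable_poissonMeasure_iff]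
  simpa using (hasSum_poisson_variance r).summable

theorem integral_sq_sub_poissonMeasure (r : ℝ≥0) :
    ∫ n : ℕ, ((n : ℝ) - r) ^ 2 ∂(poissonMeasure r) = r := by
  rw [integral_poissonMeasure]
  simpa using (hasSum_poisson_variance r).tsum_eq

/-- Coordinatewise sum of independent product Poisson vectors. -/
theorem map_add_prod_pi_poissonMeasure {d : ℕ} (a b : Fin d → ℝ≥0) :
    Measure.map (fun p : (Fin d → ℕ) × (Fin d → ℕ) => p.1 + p.2)
      ((Measure.pi fun j => poissonMeasure (a j)).prod (Measure.pi fun j => poissonMeasure (b j))) =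
    Measure.pi fun j => poissonMeasure (a j + b j) := by
  rw [← (measurePreserving_arrowProdEquivProdArrow ℕ ℕ (Fin d) (fun j => poissonMeasure (a j))
    (fun j => poissonMeasure (b j))).map_eq, Measure.map_map (by fun_prop) (by fun_prop)]
  have h := Measure.pi_map_pi (μ := fun j : Fin d => (poissonMeasure (a j)).prod
    (poissonMeasure (b j))) (f := fun _ (p : ℕ × ℕ) => p.1 + p.2) (hμ := fun j => by
      have : IsProbabilityMeasure (((poissonMeasure (a j)).prod (poissonMeasure (b j))).map
        (fun p : ℕ × ℕ => p.1 + p.2)) := Measure.isProbabilityMeasure_map (by fun_prop)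
      infer_instance) (fun j => by fun_prop)
  refine Eq.trans ?_ (h.trans ?_)
  · rfl
  · congr 1
    ext1 j
    exact poissonMeasure_conv_poissonMeasure (a j) (b j)

theorem tvDist_nonneg {X : Type*} [MeasurableSpace X] (μ ν : Measure X) : 0 ≤ tvDist μ ν :=
  Real.iSup_nonneg fun _ => abs_nonneg _

/-- Bound of the total variation distance by the Hellinger distance, in a form that is affine in
the Hellinger affinity `∫ f ∂ν`, where `f` is the square root of the density of `μ`. -/
theorem tvDist_withDensity_sq_le {X : Type*} [MeasurableSpace X] (μ ν : Measure X)
    [IsProbabilityMeasure μ] [IsProbabilityMeasure ν] {f : X → ℝ} (hf : Measurable f)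
    (hf0 : ∀ x, 0 ≤ f x) (h : μ = ν.withDensity fun x => ENNReal.ofReal (f x ^ 2))
    {ε : ℝ} (hε : 0 < ε) :
    tvDist μ ν ≤ (2 - 2 * ∫ x, f x ∂ν) / (4 * ε) + ε := by
  have hlint (A : Set X) (hA : MeasurableSet A) :
      ∫⁻ x in A, ENNReal.ofReal (f x ^ 2) ∂ν = μ A := by
    rw [h, withDensity_apply _ hA]
  have hsq : Integrable (fun x => f x ^ 2) ν := by
    refine ⟨by fun_prop, ?_⟩
    rw [hasFiniteIntegral_iff_ofReal (ae_of_all _ fun x => sq_nonneg _)]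
    have := hlint _ MeasurableSet.univ
    rw [Measure.restrict_univ] at this
    rw [this]
    exact measure_lt_top _ _
  have hreal (A : Set X) (hA : MeasurableSet A) : (μ A).toReal = ∫ x in A, f x ^ 2 ∂ν := by
    rw [integral_eq_lintegral_of_nonneg_ae (ae_of_all _ fun x => sq_nonneg _) (by fun_prop),
      hlint A hA]
  have hfi : Integrable f ν :=
    ((memLp_two_iff_integrable_sq hf.aestronglyMeasurable).2 hsq).integrable one_le_two
  have hdiff (A : Set X) (hA : MeasurableSet A) :
      (μ A).toReal - (ν A).toReal = ∫ x in A, (f x ^ 2 - 1) ∂ν := by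
    rw [integral_sub hsq.integrableOn (integrable_const _), hreal A hA]
    simp [Measure.real]
  have hone : ∫ x, f x ^ 2 ∂ν = 1 := by
    rw [← setIntegral_univ, ← hreal _ MeasurableSet.univ]
    simp
  have hdens : Integrable (fun x => f x ^ 2 - 1) ν := hsq.sub (integrable_const _)
  have hpt (x : X) : |f x ^ 2 - 1| ≤
      (1 / (2 * ε) + ε / 2) * (f x ^ 2 + 1) - (1 / ε - ε) * f x := by
    have e : |f x ^ 2 - 1| = |f x - 1| * (f x + 1) := by
      rw [show f x ^ 2 - 1 = (f x - 1) * (f x + 1) by ring, abs_mul,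
        abs_of_nonneg (by linarith [hf0 x] : 0 ≤ f x + 1)]
    have hs : (f x - 1) ^ 2 = |f x - 1| ^ 2 := (sq_abs _).symm
    have : (1 / (2 * ε) + ε / 2) * (f x ^ 2 + 1) - (1 / ε - ε) * f x =
        |f x - 1| * (f x + 1) + (|f x - 1| - ε * (f x + 1)) ^ 2 / (2 * ε) := by
      rw [sub_sq, ← hs]
      field_simp
      ring
    rw [this, e]
    have : 0 ≤ (|f x - 1| - ε * (f x + 1)) ^ 2 / (2 * ε) := by positivity
    linarith
  have htot : ∫ x, |f x ^ 2 - 1| ∂ν ≤ (2 - 2 * ∫ x, f x ∂ν) / (2 * ε) + 2 * ε := by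
    have hle : ∫ x, |f x ^ 2 - 1| ∂ν ≤
        ∫ x, ((1 / (2 * ε) + ε / 2) * (f x ^ 2 + 1) - (1 / ε - ε) * f x) ∂ν :=
      integral_mono hdens.abs (((hsq.add (integrable_const _)).const_mul _).sub
        (hfi.const_mul _)) hpt
    have hsq1 : Integrable (fun x => f x ^ 2 + 1) ν := hsq.add (integrable_const _)
    rw [integral_sub (hsq1.const_mul _) (hfi.const_mul _), integral_const_mul,
      integral_const_mul, integral_add hsq (integrable_const _), hone] at hle
    have hle1 : ∫ x, f x ∂ν ≤ 1 := by
      have : ∫ x, f x ∂ν ≤ ∫ x, ((f x ^ 2 + 1) / 2) ∂ν :=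
        integral_mono hfi ((hsq.add (integrable_const _)).div_const _)
          fun x => by simp only; nlinarith [sq_nonneg (f x - 1)]
      rw [integral_div, integral_add hsq (integrable_const _), hone] at this
      simpa using this
    refine hle.trans ?_
    have e : (1 / (2 * ε) + ε / 2) * (1 + ∫ x : X, (1 : ℝ) ∂ν) - (1 / ε - ε) * ∫ x, f x ∂ν =
        (2 - 2 * ∫ x, f x ∂ν) / (2 * ε) + ε * (1 + ∫ x, f x ∂ν) := by
      simp only [integral_const, probReal_univ, smul_eq_mul, mul_one]
      field_simp
      ring
    rw [e]
    nlinarith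
  have hbound (A : Set X) (hA : MeasurableSet A) :
      2 * |(μ A).toReal - (ν A).toReal| ≤ ∫ x, |f x ^ 2 - 1| ∂ν := by
    have hz : ∫ x in A, (f x ^ 2 - 1) ∂ν + ∫ x in Aᶜ, (f x ^ 2 - 1) ∂ν = 0 := by
      rw [integral_add_compl hA hdens, integral_sub hsq (integrable_const _), hone]
      simp
    have h1 := abs_integral_le_integral_abs (μ := ν.restrict A) (f := fun x => f x ^ 2 - 1)
    have h2 := abs_integral_le_integral_abs (μ := ν.restrict Aᶜ) (f := fun x => f x ^ 2 - 1)
    rw [eq_neg_of_add_eq_zero_right hz, abs_neg] at h2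
    rw [← integral_add_compl hA hdens.abs, hdiff A hA]
    linarith
  refine ciSup_le fun A => ?_
  have := hbound A.1 A.2
  have e : (2 - 2 * ∫ x, f x ∂ν) / (2 * ε) = 2 * ((2 - 2 * ∫ x, f x ∂ν) / (4 * ε)) := by
    field_simp; ring
  linarith

/-- The square root of the density of `Poi(a)` with respect to `Poi(b)`. -/
noncomputable def poissonSqrtDensity (a b : ℝ≥0) (n : ℕ) : ℝ :=
  Real.exp (-(((a : ℝ) - b) / 2)) * Real.sqrt ((a : ℝ) / b) ^ n

theorem poissonSqrtDensity_nonneg (a b : ℝ≥0) (n : ℕ) : 0 ≤ poissonSqrtDensity a b n := by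
  unfold poissonSqrtDensity
  positivity

theorem poissonMeasure_singleton_eq_sq_mul (a : ℝ≥0) {b : ℝ≥0} (hb : 0 < b) (n : ℕ) :
    poissonMeasure a {n} =
      ENNReal.ofReal (poissonSqrtDensity a b n ^ 2) * poissonMeasure b {n} := by
  have hb' : (b : ℝ) ≠ 0 := by exact_mod_cast hb.ne'
  rw [poissonMeasure_singleton, poissonMeasure_singleton, ← ENNReal.ofReal_mul (sq_nonneg _)]
  congr 1
  unfold poissonSqrtDensity
  rw [mul_pow, ← pow_mul, mul_comm n 2, pow_mul, Real.sq_sqrt (by positivity), ← Real.exp_nat_mul,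
    div_pow]
  have : Real.exp (-(a : ℝ)) = Real.exp (((2 : ℕ) : ℝ) * -(((a : ℝ) - b) / 2)) * Real.exp (-b) := by
    rw [← Real.exp_add]
    congr 1
    push_cast
    ring
  rw [this]
  field_simp

theorem integral_poissonSqrtDensity (a : ℝ≥0) {b : ℝ≥0} (hb : 0 < b) :
    ∫ n, poissonSqrtDensity a b n ∂(poissonMeasure b) =
      Real.exp (-((Real.sqrt a - Real.sqrt b) ^ 2 / 2)) := by
  have hb' : (0 : ℝ) < b := by exact_mod_cast hb
  have hs : (b : ℝ) * Real.sqrt (a / b) = Real.sqrt a * Real.sqrt b := by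
    rw [Real.sqrt_div a.coe_nonneg]
    have h0 : Real.sqrt b ≠ 0 := (Real.sqrt_pos.2 hb').ne'
    field_simp
    rw [Real.sq_sqrt hb'.le, mul_comm]
  rw [integral_poissonMeasure]
  have h := (NormedSpace.expSeries_div_hasSum_exp ((b : ℝ) * Real.sqrt (a / b))).mul_left
    (Real.exp (-b) * Real.exp (-(((a : ℝ) - b) / 2)))
  rw [← Real.exp_eq_exp_ℝ] at h
  convert h.tsum_eq using 1
  · congr 1
    ext n
    simp only [poissonSqrtDensity, smul_eq_mul]
    rw [mul_pow]
    ring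
  · rw [← Real.exp_add, ← Real.exp_add, hs]
    congr 1
    rw [sub_sq, Real.sq_sqrt a.coe_nonneg, Real.sq_sqrt hb'.le]
    ring

theorem tvDist_pi_poissonMeasure_le {d : ℕ} (a b : Fin d → ℝ≥0) (hb : ∀ j, 0 < b j)
    {ε : ℝ} (hε : 0 < ε) :
    tvDist (Measure.pi fun j => poissonMeasure (a j)) (Measure.pi fun j => poissonMeasure (b j)) ≤
      (∑ j, (Real.sqrt (a j) - Real.sqrt (b j)) ^ 2) / (4 * ε) + ε := by
  have h := tvDist_withDensity_sq_le (Measure.pi fun j => poissonMeasure (a j))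
    (Measure.pi fun j => poissonMeasure (b j))
    (f := fun x => ∏ j, poissonSqrtDensity (a j) (b j) (x j)) (by fun_prop)
    (fun x => Finset.prod_nonneg fun j _ => poissonSqrtDensity_nonneg _ _ _) (by
      refine Measure.ext_of_singleton fun x => ?_
      rw [withDensity_apply _ (measurableSet_singleton x), lintegral_singleton,
        Measure.pi_singleton, Measure.pi_singleton, ← Finset.prod_pow,
        ENNReal.ofReal_prod_of_nonneg (fun j _ => sq_nonneg _), ← Finset.prod_mul_distrib]
      exact Finset.prod_congr rfl fun j _ => poissonMeasure_singleton_eq_sq_mul _ (hb j) _) hε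
  refine h.trans ?_
  gcongr
  rw [integral_fintype_prod_eq_prod,
    Finset.prod_congr rfl fun j _ => integral_poissonSqrtDensity (a j) (hb j), ← Real.exp_sum,
    Finset.sum_neg_distrib, ← Finset.sum_div]
  linarith [Real.add_one_le_exp (-((∑ j, (Real.sqrt (a j) - Real.sqrt (b j)) ^ 2) / 2))]

theorem sq_sqrt_sub_sqrt_le {a b t : ℝ} (ht : 0 < t) (ha : t ≤ a) (hb : t ≤ b) :
    (Real.sqrt a - Real.sqrt b) ^ 2 ≤ (a - b) ^ 2 / (4 * t) := by
  have hsa := Real.sqrt_le_sqrt ha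
  have hsb := Real.sqrt_le_sqrt hb
  have ht' := Real.sq_sqrt ht.le
  have h1 : 4 * t ≤ (Real.sqrt a + Real.sqrt b) ^ 2 := by nlinarith [Real.sqrt_nonneg t]
  have h2 : (a - b) ^ 2 = (Real.sqrt a - Real.sqrt b) ^ 2 * (Real.sqrt a + Real.sqrt b) ^ 2 := by
    rw [← mul_pow]
    congr 1
    nlinarith [Real.sq_sqrt (ht.le.trans ha), Real.sq_sqrt (ht.le.trans hb)]
  rw [le_div_iff₀ (by positivity), h2]
  gcongr

theorem le_sqrt_of_forall_le_div_add {t S : ℝ} (hS : 0 ≤ S)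
    (h : ∀ ε : ℝ, 0 < ε → t ≤ S / (4 * ε) + ε) : t ≤ Real.sqrt S := by
  rcases hS.eq_or_lt with rfl | hS
  · rw [Real.sqrt_zero]
    refine le_of_forall_pos_le_add fun ε hε => ?_
    simpa using h ε hε
  · have hs := Real.sqrt_pos.2 hS
    refine (h (Real.sqrt S / 2) (by positivity)).trans (le_of_eq ?_)
    field_simp
    rw [Real.sq_sqrt hS.le]
    ring

/-- Law of the total count in one coordinate of an i.i.d. product Poisson sample. -/
theorem map_sum_apply_pi_pi_poissonMeasure {d : ℕ} (N : ℕ) (lam : Fin d → ℝ≥0) (j : Fin d) :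
    (Measure.pi fun _ : Fin N => Measure.pi fun j : Fin d => poissonMeasure (lam j)).map
      (fun x => ∑ i, x i j) = poissonMeasure (N * lam j) := by
  rw [← map_sum_pi_poissonMeasure N (lam j)]
  have h := measurePreserving_pi (fun _ : Fin N => Measure.pi fun j : Fin d => poissonMeasure (lam j))
    (fun _ : Fin N => poissonMeasure (lam j)) (f := fun _ x => x j)
    (fun _ => measurePreserving_eval _ j)
  rw [← h.map_eq, Measure.map_map (by fun_prop) h.measurable]
  rfl

theorem exists_rate_min_chiSq_ge {n : ℕ} (hn : 3 ≤ n) : ∃ lam : ℝ≥0, 0 < lam ∧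
    (1 / 8 : ℝ) / Real.log n ≤
      ∫ xs : Fin n → ℕ,
        min (Real.exp ((((n : ℝ)⁻¹ * ∑ i, (xs i : ℝ)) - (lam : ℝ)) ^ 2 / (lam : ℝ)) - 1) (n : ℝ)
        ∂(Measure.pi fun _ : Fin n => poissonMeasure lam) := by
  have hn3 : (3 : ℝ) ≤ n := by exact_mod_cast hn
  have hn0 : (0 : ℝ) < n := by linarith
  have hlog : 1 ≤ Real.log n := by
    rw [Real.le_log_iff_exp_le hn0]
    linarith [Real.exp_one_lt_d9]
  have hlog0 : 0 < Real.log n := by linarith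
  set μ : ℝ := 1 / (4 * n * Real.log n) with hμ
  have hμ0 : 0 < μ := by positivity
  have hμ1 : μ ≤ 1 / 12 := by
    rw [hμ]
    gcongr
    nlinarith
  have hl0 : 0 < μ / n := by positivity
  refine ⟨⟨μ / n, hl0.le⟩, hl0, ?_⟩
  set lam : ℝ≥0 := ⟨μ / n, hl0.le⟩ with hlam
  have hlamc : (lam : ℝ) = μ / n := rfl
  set F : ℕ → ℝ := fun s => min (Real.exp (((n : ℝ)⁻¹ * s - lam) ^ 2 / lam) - 1) n with hF
  have hF0 (s : ℕ) : 0 ≤ F s := by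
    refine le_min ?_ hn0.le
    have : 0 ≤ ((n : ℝ)⁻¹ * s - lam) ^ 2 / lam := by positivity
    linarith [Real.one_le_exp this]
  have hF1 : F 1 = n := by
    refine min_eq_right ?_
    have e : ((n : ℝ)⁻¹ * (1 : ℕ) - lam) ^ 2 / lam = 4 * Real.log n * (1 - μ) ^ 2 := by
      have h4 : 4 * Real.log n = 1 / (n * μ) := by
        rw [hμ]; field_simp
      rw [h4, hlamc]
      push_cast
      field_simp
    rw [e]
    have : 2 * Real.log n ≤ 4 * Real.log n * (1 - μ) ^ 2 := by
      have h1 : 1 / 2 ≤ (1 - μ) ^ 2 := by nlinarith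
      nlinarith
    have h2 := Real.exp_le_exp.2 this
    rw [two_mul, Real.exp_add, Real.exp_log hn0] at h2
    nlinarith
  have hdens : Integrable F (poissonMeasure (n * lam)) := by
    refine Integrable.of_bound (C := n) (by fun_prop) (ae_of_all _ fun s => ?_)
    rw [Real.norm_of_nonneg (hF0 s)]
    exact min_le_right _ _
  have hmap : ∫ xs : Fin n → ℕ,
        min (Real.exp ((((n : ℝ)⁻¹ * ∑ i, (xs i : ℝ)) - (lam : ℝ)) ^ 2 / (lam : ℝ)) - 1) (n : ℝ)
        ∂(Measure.pi fun _ : Fin n => poissonMeasure lam) =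
      ∫ s, F s ∂(poissonMeasure (n * lam)) := by
    rw [← map_sum_pi_poissonMeasure, integral_map (by fun_prop) (by fun_prop)]
    simp [hF]
  rw [hmap]
  have hlow : (poissonMeasure (n * lam)).real {1} * n ≤ ∫ s, F s ∂(poissonMeasure (n * lam)) := by
    have : ∫ s in {1}, F s ∂(poissonMeasure (n * lam)) ≤ ∫ s, F s ∂(poissonMeasure (n * lam)) :=
      setIntegral_le_integral hdens (ae_of_all _ hF0)
    rwa [integral_singleton, hF1, smul_eq_mul] at this
  refine le_trans ?_ hlow
  have hc : ((n * lam : ℝ≥0) : ℝ) = μ := by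
    push_cast
    rw [hlamc]
    field_simp
  rw [poissonMeasure_real_singleton, hc]
  have h3 : μ * n = 1 / (4 * Real.log n) := by
    rw [hμ]; field_simp
  have h4 : Real.exp (-μ) * μ ^ 1 / (Nat.factorial 1 : ℕ) * n = Real.exp (-μ) * (μ * n) := by
    simp; ring
  rw [h4, h3, div_le_iff₀ hlog0]
  have h5 : Real.exp (-μ) * (1 / (4 * Real.log n)) * Real.log n = Real.exp (-μ) / 4 := by
    field_simp
  rw [h5]
  linarith [Real.add_one_le_exp (-μ)]

/-- Poisson model: failure of naive learning, and the combined
sufficiency + learning amplification bound.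

(i) There is an absolute constant `c > 0` such that for every `n ≥ 3` there exists a
rate `λ > 0` with `E[min(χ²(Poi(λ̂_n) ‖ Poi(λ)), n)] ≥ c / log n`, where
`λ̂_n = (1/n) Σ_i X_i` is the empirical rate from `n` i.i.d. `Poi(λ)` samples and
`χ²(Poi(a)‖Poi(b)) = exp((a−b)²/b) − 1`.

(ii) For the product Poisson model `∏_{j=1}^d Poi(λ_j)` with `n` even: splitting the
samples, computing `λ̂_j = (2/n) Σ_{i ≤ n/2} X_{i,j}` on the first half, and setting
`T̂ = T + Z` with `T = Σ_{i > n/2} X_i ∼ ∏_j Poi((n/2)λ_j)` and, conditionally on the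
first half, `Z ∼ ∏_j Poi(m λ̂_j)` independent of `T`, the expected TV distance between
the conditional law of `T̂` and `∏_j Poi((n/2 + m)λ_j)` is at most `m√(2d)/n`. -/
theorem poisson_amplification_claims :
    (∃ c : ℝ, 0 < c ∧
      ∀ n : ℕ, 3 ≤ n → ∃ lam : ℝ≥0, 0 < lam ∧
        c / Real.log n ≤
          ∫ xs : Fin n → ℕ,
            min (Real.exp ((((n : ℝ)⁻¹ * ∑ i, (xs i : ℝ)) - (lam : ℝ)) ^ 2 /
                (lam : ℝ)) - 1) (n : ℝ)
            ∂(Measure.pi fun _ : Fin n => poissonMeasure lam)) ∧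
    (∀ (d n m : ℕ), Even n → 2 ≤ n → ∀ lam : Fin d → ℝ≥0, (∀ j, 0 < lam j) →
      ∫ x : Fin (n / 2) → Fin d → ℕ,
          tvDist
            (Measure.map (fun p : (Fin d → ℕ) × (Fin d → ℕ) => p.1 + p.2)
              ((Measure.pi fun j : Fin d =>
                  poissonMeasure (((n / 2 : ℕ) : ℝ≥0) * lam j)).prod
                (Measure.pi fun j : Fin d =>
                  poissonMeasure ((m : ℝ≥0) *
                    (((2 * ∑ i, x i j : ℕ) : ℝ≥0) / (n : ℝ≥0))))))
            (Measure.pi fun j : Fin d =>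
              poissonMeasure ((((n / 2 : ℕ) : ℝ≥0) + (m : ℝ≥0)) * lam j))
        ∂(Measure.pi fun _ : Fin (n / 2) =>
            Measure.pi fun j : Fin d => poissonMeasure (lam j)) ≤
      (m : ℝ) * Real.sqrt (2 * d) / n) := by
  refine ⟨⟨1 / 8, by norm_num, fun n hn => exists_rate_min_chiSq_ge hn⟩, ?_⟩
  intro d n m hn hn2 lam hlam
  obtain ⟨k, rfl⟩ := hn
  have hk : 0 < k := by omega
  have hk2 : (k + k) / 2 = k := by omega
  have hk0 : (0 : ℝ) < k := by exact_mod_cast hk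
  rw [hk2]
  set P := Measure.pi fun _ : Fin k => Measure.pi fun j : Fin d => poissonMeasure (lam j) with hP
  have hrhs : Real.sqrt ((m : ℝ) ^ 2 * d / (4 * k ^ 2)) ≤
      (m : ℝ) * Real.sqrt (2 * d) / ((k + k : ℕ) : ℝ) := by
    rw [Real.sqrt_le_left (by positivity), div_pow, mul_pow, Real.sq_sqrt (by positivity)]
    push_cast
    have e : ((k : ℝ) + k) ^ 2 = 4 * k ^ 2 := by ring
    rw [e]
    gcongr
    have : (0 : ℝ) ≤ d := by positivity
    linarith
  refine le_trans (le_sqrt_of_forall_le_div_add (by positivity) fun ε hε => ?_) hrhs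
  have hmeas (j : Fin d) : Measurable fun x : Fin k → Fin d → ℕ => ∑ i, x i j := by fun_prop
  have hgi (j : Fin d) :
      Integrable (fun x : Fin k → Fin d → ℕ => (((∑ i, x i j : ℕ) : ℝ) - (k * lam j : ℝ≥0)) ^ 2)
        P := by
    have h := integrable_sq_sub_poissonMeasure (k * lam j)
    rw [← map_sum_apply_pi_pi_poissonMeasure] at h
    exact (integrable_map_measure (by fun_prop) (hmeas j).aemeasurable).1 h
  have hge (j : Fin d) :
      ∫ x : Fin k → Fin d → ℕ, (((∑ i, x i j : ℕ) : ℝ) - (k * lam j : ℝ≥0)) ^ 2 ∂P = k * lam j := by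
    have h := integral_sq_sub_poissonMeasure (k * lam j)
    rw [← map_sum_apply_pi_pi_poissonMeasure, integral_map (hmeas j).aemeasurable (by fun_prop)] at h
    simpa using h
  set G : (Fin k → Fin d → ℕ) → ℝ := fun x =>
    (∑ j, (m : ℝ) ^ 2 / (4 * k ^ 3 * lam j) *
      (((∑ i, x i j : ℕ) : ℝ) - (k * lam j : ℝ≥0)) ^ 2) / (4 * ε) + ε with hG
  have hGi : Integrable G P :=
    ((integrable_finsetSum _ fun j _ => (hgi j).const_mul _).div_const _).add (integrable_const _)
  have hGe : ∫ x, G x ∂P = (m : ℝ) ^ 2 * d / (4 * k ^ 2) / (4 * ε) + ε := by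
    rw [hG, integral_add ((integrable_finsetSum _ fun j _ => (hgi j).const_mul _).div_const _)
      (integrable_const _), integral_div, integral_finsetSum _ fun j _ => (hgi j).const_mul _]
    simp_rw [integral_const_mul, hge]
    have hterm (j : Fin d) : (m : ℝ) ^ 2 / (4 * k ^ 3 * lam j) * (k * lam j) =
        (m : ℝ) ^ 2 / (4 * k ^ 2) := by
      have : (lam j : ℝ) ≠ 0 := by exact_mod_cast (hlam j).ne'
      field_simp
    simp only [hterm, Finset.sum_const, Finset.card_univ, Fintype.card_fin, nsmul_eq_mul,
      integral_const, probReal_univ, smul_eq_mul, one_mul]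
    ring
  rw [← hGe]
  refine integral_mono_of_nonneg (ae_of_all _ fun x => tvDist_nonneg _ _) hGi
    (ae_of_all _ fun x => ?_)
  simp only
  rw [map_add_prod_pi_poissonMeasure]
  refine (tvDist_pi_poissonMeasure_le _ _ (fun j => ?_) hε).trans ?_
  · have := hlam j
    have hk' : (0 : ℝ≥0) < k := by exact_mod_cast hk
    positivity
  · rw [hG]
    simp only
    gcongr with j
    have hl : (0 : ℝ) < lam j := by exact_mod_cast hlam j
    push_cast
    refine (sq_sqrt_sub_sqrt_le (t := k * lam j) (by positivity) ?_ ?_).trans (le_of_eq ?_)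
    · have : (0 : ℝ) ≤ m * (2 * (∑ i, (x i j : ℝ)) / (k + k)) := by positivity
      linarith
    · have : (0 : ℝ) ≤ m * lam j := by positivity
      linarith
    · field_simp
      ring
end

section
/- For integers p ≥ d + 1 ≥ 2, let 𝒫 be the low-rank Gaussian covariance model on ℝ^p consisting of all distributions N(0, UUᵀ) where U ∈ ℝ^{p×d} satisfies UᵀU = I_d (so the covariance is the orthogonal projection onto some d-dimensional subspace). Then: (i) if n ≥ d, ε*(𝒫, n, 1) = 0, i.e. a perfect (n, n+1) sample amplification exists; and (ii) if n < d, ε*(𝒫, n, 1) = 1, i.e. every randomized amplification map T satisfies sup over U of ‖N(0,UUᵀ)^{⊗(n+1)} − N(0,UUᵀ)^{⊗n}∘T^{−1}‖_TV = 1. -/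
open MeasureTheory ProbabilityTheory
open scoped ENNReal NNReal BigOperators

/-- Minimax sample amplification error `ε*(𝒫, n, m)` for the family `(P θ)_θ`. -/
noncomputable def ampErr {X Θ : Type*} [MeasurableSpace X] (P : Θ → Measure X)
    (n m : ℕ) : ℝ :=
  ⨅ T : {T : Kernel (Fin n → X) (Fin (n + m) → X) // IsMarkovKernel T},
    ⨆ θ : Θ, tvDist (Measure.pi fun _ : Fin (n + m) => P θ)
      ((Measure.pi fun _ : Fin n => P θ).bind T.1)

/-- The (possibly singular) Gaussian `N(0, UUᵀ)` on `ℝ^p`, defined as the law of `Uz`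
for a standard Gaussian vector `z` on `ℝ^d`. -/
noncomputable def lowRankGaussian (p d : ℕ) (U : Matrix (Fin p) (Fin d) ℝ) :
    Measure (Fin p → ℝ) :=
  Measure.map (fun z : Fin d → ℝ => Matrix.mulVec U z)
    (Measure.pi fun _ : Fin d => gaussianReal 0 1)

theorem MeasureTheory.Measure.AbsolutelyContinuous.pi_fin {E : Type*} [MeasurableSpace E]
    {μ ν : Measure E} [SigmaFinite μ] [SigmaFinite ν] (h : μ ≪ ν) (k : ℕ) :
    (Measure.pi fun _ : Fin k => μ) ≪ Measure.pi fun _ : Fin k => ν := by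
  induction k with
  | zero =>
    rw [Measure.pi_of_empty, Measure.pi_of_empty]
  | succ k ih =>
    have hμ := (measurePreserving_piFinSuccAbove (fun _ : Fin (k + 1) => μ) 0).symm
    have hν := (measurePreserving_piFinSuccAbove (fun _ : Fin (k + 1) => ν) 0).symm
    rw [← hμ.map_eq, ← hν.map_eq]
    exact (h.prod ih).map (MeasurableEquiv.measurable _)

theorem gaussianPi_absolutelyContinuous (d : ℕ) :
    (Measure.pi fun _ : Fin d => gaussianReal 0 1) ≪ (volume : Measure (Fin d → ℝ)) := by
  rw [volume_pi]
  exact (gaussianReal_absolutelyContinuous 0 one_ne_zero).pi_fin d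

theorem ae_linearIndependent_volume {d k : ℕ} (hk : k ≤ d) :
    ∀ᵐ z ∂(Measure.pi fun _ : Fin k => (volume : Measure (Fin d → ℝ))),
      LinearIndependent ℝ z := by
  induction k with
  | zero => exact Filter.Eventually.of_forall fun z => linearIndependent_empty_type
  | succ k ih =>
    have hmp := measurePreserving_piFinSuccAbove
      (fun _ : Fin (k + 1) => (volume : Measure (Fin d → ℝ))) 0
    have hopen : MeasurableSet {z : Fin (k + 1) → Fin d → ℝ | LinearIndependent ℝ z} :=
      isOpen_setOfPred_linearIndependent.measurableSet
    rw [← hmp.symm.map_eq, ae_map_iff (MeasurableEquiv.measurable _).aemeasurable hopen]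
    · have hS := (MeasurableEquiv.piFinSuccAbove
        (fun _ : Fin (k + 1) => Fin d → ℝ) 0).symm.measurable hopen
      refine Measure.ae_prod_iff_ae_ae hS |>.2 ?_
      refine (Measure.ae_ae_comm (p := fun x y => LinearIndependent ℝ
        ((MeasurableEquiv.piFinSuccAbove (fun _ : Fin (k + 1) => Fin d → ℝ) 0).symm (x, y)))
        hS).2 ?_
      filter_upwards [ih (by omega)] with v hv
      have hne : Submodule.span ℝ (Set.range v) ≠ ⊤ := by
        intro htop
        have h1 := finrank_span_eq_card hv
        rw [htop, finrank_top] at h1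
        simp at h1
        omega
      have h0 := Measure.addHaar_submodule volume _ hne
      filter_upwards [compl_mem_ae_iff.2 h0] with x hx
      have : (MeasurableEquiv.piFinSuccAbove (fun _ : Fin (k + 1) => Fin d → ℝ) 0).symm (x, v)
          = Fin.cons x v := by
        simp [MeasurableEquiv.piFinSuccAbove, Fin.consEquiv]
      rw [this, linearIndependent_finCons]
      exact ⟨hv, hx⟩

theorem ae_linearIndependent_castLE {d n : ℕ} (μ : Measure (Fin d → ℝ)) [IsProbabilityMeasure μ]
    (hμ : μ ≪ volume) (hn : d ≤ n) :
    ∀ᵐ z ∂(Measure.pi fun _ : Fin n => μ),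
      LinearIndependent ℝ fun i : Fin d => z (Fin.castLE hn i) := by
  induction n, hn using Nat.le_induction with
  | base => exact (hμ.pi_fin d).ae_le (ae_linearIndependent_volume le_rfl)
  | succ n hn ih =>
    have hmp := measurePreserving_snd.comp
      (measurePreserving_piFinSuccAbove (fun _ : Fin (n + 1) => μ) (Fin.last n))
    filter_upwards [hmp.quasiMeasurePreserving.ae ih] with z hz
    convert hz using 2 with i
    simp [MeasurableEquiv.piFinSuccAbove, Fin.init]

theorem map_transpose_mulVec_gaussian {p d : ℕ} (U : Matrix (Fin p) (Fin d) ℝ)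
    (hU : U.transpose * U = 1) :
    (Measure.pi fun _ : Fin p => gaussianReal 0 1).map (fun w => U.transpose.mulVec w) =
      Measure.pi fun _ : Fin d => gaussianReal 0 1 := by
  have hL : Measurable fun w : Fin p → ℝ => U.transpose.mulVec w :=
    (Continuous.matrix_mulVec continuous_const continuous_id).measurable
  refine (MeasurableEquiv.toLp 2 (Fin d → ℝ)).map_measurableEquiv_injective ?_
  have hm : Measurable (WithLp.toLp 2 : (Fin d → ℝ) → _) :=
    (MeasurableEquiv.toLp 2 (Fin d → ℝ)).measurable
  have hm' : Measurable (WithLp.toLp 2 : (Fin p → ℝ) → _) :=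
    (MeasurableEquiv.toLp 2 (Fin p → ℝ)).measurable
  rw [MeasurableEquiv.coe_toLp, map_pi_eq_stdGaussian, Measure.map_map hm hL]
  refine Measure.ext_of_charFun (E := EuclideanSpace ℝ (Fin d)) ?_
  ext t
  have key := charFun_stdGaussian (E := EuclideanSpace ℝ (Fin p))
    (WithLp.toLp 2 (U.mulVec t.ofLp))
  rw [← map_pi_eq_stdGaussian, charFun_apply,
    integral_map hm'.aemeasurable (by fun_prop)] at key
  rw [charFun_stdGaussian, charFun_apply,
    integral_map (hm.comp hL).aemeasurable (by fun_prop)]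
  have hnorm : ‖(WithLp.toLp 2 (U.mulVec t.ofLp) : EuclideanSpace ℝ (Fin p))‖ = ‖t‖ := by
    rw [← sq_eq_sq₀ (norm_nonneg _) (norm_nonneg _), ← real_inner_self_eq_norm_sq,
      ← real_inner_self_eq_norm_sq, EuclideanSpace.inner_eq_star_dotProduct,
      EuclideanSpace.inner_eq_star_dotProduct]
    simp [Matrix.dotProduct_mulVec, ← Matrix.mulVec_transpose, Matrix.mulVec_mulVec, hU]
  rw [hnorm] at key
  rw [← key]
  congr with w
  congr 3
  simp only [EuclideanSpace.inner_eq_star_dotProduct, Function.comp_apply, star_trivial]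
  rw [Matrix.mulVec_transpose, dotProduct_comm, ← Matrix.dotProduct_mulVec, dotProduct_comm]

theorem abs_measure_sub_le_one {X : Type*} [MeasurableSpace X] (μ ν : Measure X)
    [IsProbabilityMeasure μ] [IsProbabilityMeasure ν] (A : Set X) : |(μ A).toReal - (ν A).toReal| ≤ 1 := by
  have h1 : (μ A).toReal ≤ 1 := measureReal_le_one
  have h2 : (ν A).toReal ≤ 1 := measureReal_le_one
  have h3 : 0 ≤ (μ A).toReal := ENNReal.toReal_nonneg
  have h4 : 0 ≤ (ν A).toReal := ENNReal.toReal_nonneg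
  rw [abs_le]
  constructor <;> linarith

theorem tvDist_self {X : Type*} [MeasurableSpace X] (μ : Measure X) : tvDist μ μ = 0 := by
  simp [tvDist]

theorem tvDist_eq_one {X : Type*} [MeasurableSpace X] (μ ν : Measure X) [IsProbabilityMeasure μ]
    [IsProbabilityMeasure ν] {A : Set X} (hA : MeasurableSet A) (h1 : μ A = 1) (h0 : ν A = 0) :
    tvDist μ ν = 1 := by
  refine le_antisymm (ciSup_le fun _ => abs_measure_sub_le_one μ ν _) ?_
  · have := le_ciSup (f := fun A : {s : Set X // MeasurableSet s} =>
      |(μ A).toReal - (ν A).toReal|)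
      ⟨1, by rintro _ ⟨B, rfl⟩; exact abs_measure_sub_le_one μ ν B⟩ ⟨A, hA⟩
    simp only [h1, h0] at this
    simpa [tvDist] using this

instance isProbabilityMeasure_lowRankGaussian (p d : ℕ) (U : Matrix (Fin p) (Fin d) ℝ) :
    IsProbabilityMeasure (lowRankGaussian p d U) :=
  Measure.isProbabilityMeasure_map
    (Continuous.matrix_mulVec continuous_const continuous_id).measurable.aemeasurable

theorem ampErr_eq_zero {X Θ : Type*} [MeasurableSpace X] (P : Θ → Measure X) (n m : ℕ)
    (T : Kernel (Fin n → X) (Fin (n + m) → X)) [IsMarkovKernel T]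
    (hT : ∀ θ, (Measure.pi fun _ : Fin n => P θ).bind T = Measure.pi fun _ => P θ) :
    ampErr P n m = 0 := by
  refine le_antisymm ?_ (Real.iInf_nonneg fun _ => Real.iSup_nonneg fun _ => tvDist_nonneg _ _)
  refine (ciInf_le ⟨0, ?_⟩ ⟨T, inferInstance⟩).trans ?_
  · rintro _ ⟨_, rfl⟩
    exact Real.iSup_nonneg fun _ => tvDist_nonneg _ _
  · simp [hT, tvDist_self]

theorem ampErr_eq_one {X Θ : Type*} [MeasurableSpace X] [Nonempty X] (P : Θ → Measure X)
    [∀ θ, IsProbabilityMeasure (P θ)] (n m : ℕ)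
    (h : ∀ T : Kernel (Fin n → X) (Fin (n + m) → X), IsMarkovKernel T →
      ∃ θ, ∃ A, MeasurableSet A ∧ (Measure.pi fun _ => P θ) A = 1 ∧
        (Measure.pi fun _ : Fin n => P θ).bind T A = 0) :
    ampErr P n m = 1 := by
  have : Nonempty {T : Kernel (Fin n → X) (Fin (n + m) → X) // IsMarkovKernel T} :=
    ⟨⟨Kernel.const _ (Measure.dirac fun _ => Classical.arbitrary X), inferInstance⟩⟩
  have hsup : ∀ T : {T : Kernel (Fin n → X) (Fin (n + m) → X) // IsMarkovKernel T},
      ⨆ θ : Θ, tvDist (Measure.pi fun _ : Fin (n + m) => P θ)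
        ((Measure.pi fun _ : Fin n => P θ).bind T.1) = 1 := by
    rintro ⟨T, hT⟩
    obtain ⟨θ, A, hA, h1, h0⟩ := h T hT
    have hle : ∀ θ, tvDist (Measure.pi fun _ : Fin (n + m) => P θ)
        ((Measure.pi fun _ : Fin n => P θ).bind T) ≤ 1 := fun θ =>
      ciSup_le fun A => abs_measure_sub_le_one _ _ _
    have : Nonempty Θ := ⟨θ⟩
    refine le_antisymm (ciSup_le hle) ?_
    refine le_ciSup_of_le ⟨1, ?_⟩ θ (tvDist_eq_one _ _ hA h1 h0).ge
    rintro _ ⟨θ, rfl⟩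
    exact hle θ
  simp [ampErr, hsup]

/-- Orthogonal projection of `w` on the column space of `M`, provided that `M` has full column
rank. -/
noncomputable def columnProj {p d : ℕ} (M : Matrix (Fin p) (Fin d) ℝ) (w : Fin p → ℝ) :
    Fin p → ℝ :=
  (M * (M.transpose * M)⁻¹ * M.transpose).mulVec w

theorem columnProj_mul {p d : ℕ} {U : Matrix (Fin p) (Fin d) ℝ} (hU : U.transpose * U = 1)
    {Z : Matrix (Fin d) (Fin d) ℝ} (hZ : IsUnit Z) (w : Fin p → ℝ) :
    columnProj (U * Z) w = U.mulVec (U.transpose.mulVec w) := by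
  have hdet : IsUnit Z.det := (Matrix.isUnit_iff_isUnit_det Z).1 hZ
  have hdet' : IsUnit Z.transpose.det := by rwa [Matrix.det_transpose]
  have h1 : (U * Z).transpose * (U * Z) = Z.transpose * Z := by
    rw [Matrix.transpose_mul, Matrix.mul_assoc, ← Matrix.mul_assoc U.transpose, hU,
      Matrix.one_mul]
  rw [columnProj, Matrix.mulVec_mulVec, h1, Matrix.mul_inv_rev, Matrix.transpose_mul,
    Matrix.mul_assoc U, ← Matrix.mul_assoc Z, Matrix.mul_nonsing_inv _ hdet, Matrix.one_mul,
    Matrix.mul_assoc U, ← Matrix.mul_assoc _ Z.transpose, Matrix.nonsing_inv_mul _ hdet',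
    Matrix.one_mul]

theorem measurable_columnProj {p d : ℕ} {α : Type*} [TopologicalSpace α] [MeasurableSpace α]
    [OpensMeasurableSpace α] {M : α → Matrix (Fin p) (Fin d) ℝ} {w : α → Fin p → ℝ}
    (hM : Continuous M) (hw : Continuous w) : Measurable fun x => columnProj (M x) (w x) := by
  have h : ∀ x, columnProj (M x) (w x) = ((M x).transpose * M x).det⁻¹ •
      (M x * ((M x).transpose * M x).adjugate * (M x).transpose).mulVec (w x) := fun x => by
    rw [columnProj, Matrix.inv_def, Ring.inverse_eq_inv', Matrix.mul_smul, Matrix.smul_mul,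
      Matrix.smul_mulVec]
  simp_rw [h]
  have hG : Continuous fun x => (M x).transpose * M x := hM.matrix_transpose.matrix_mul hM
  exact hG.matrix_det.measurable.inv.smul
    (((hM.matrix_mul hG.matrix_adjugate).matrix_mul hM.matrix_transpose).matrix_mulVec
      hw).measurable

theorem exists_perfect_amplification {p d n : ℕ} (hn : d ≤ n) :
    ∃ T : Kernel (Fin n → Fin p → ℝ) (Fin (n + 1) → Fin p → ℝ), IsMarkovKernel T ∧
      ∀ U : Matrix (Fin p) (Fin d) ℝ, U.transpose * U = 1 →
        (Measure.pi fun _ : Fin n => lowRankGaussian p d U).bind T =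
          Measure.pi fun _ => lowRankGaussian p d U := by
  set e := MeasurableEquiv.piFinSuccAbove (fun _ : Fin (n + 1) => Fin p → ℝ) (Fin.last n)
  let M : (Fin n → Fin p → ℝ) → Matrix (Fin p) (Fin d) ℝ :=
    fun x => Matrix.of fun k i => x (Fin.castLE hn i) k
  have hM : Continuous M := by
    refine continuous_matrix fun k i => ?_
    exact (continuous_apply k).comp (continuous_apply _)
  let f : (Fin n → Fin p → ℝ) × (Fin p → ℝ) → Fin (n + 1) → Fin p → ℝ :=
    fun x => e.symm (columnProj (M x.1) x.2, x.1)
  have hf : Measurable f := e.symm.measurable.comp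
    ((measurable_columnProj (hM.comp continuous_fst) continuous_snd).prodMk measurable_fst)
  let γ : Measure (Fin p → ℝ) := Measure.pi fun _ => gaussianReal 0 1
  refine ⟨(Kernel.id ×ₖ Kernel.const _ γ).map f, Kernel.IsMarkovKernel.map _ hf, fun U hU => ?_⟩
  set P := lowRankGaussian p d U
  have hbind : (Measure.pi fun _ : Fin n => P).bind ((Kernel.id ×ₖ Kernel.const _ γ).map f) =
      ((Measure.pi fun _ : Fin n => P).prod γ).map f := by
    rw [← Measure.map_comp _ _ hf, ← Measure.compProd_eq_comp_prod, Measure.compProd_const]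
  have hUm : Measurable fun z : Fin d → ℝ => U.mulVec z :=
    (Continuous.matrix_mulVec continuous_const continuous_id).measurable
  have hUtm : Measurable fun w : Fin p → ℝ => U.transpose.mulVec w :=
    (Continuous.matrix_mulVec continuous_const continuous_id).measurable
  have hUU : Measurable fun w : Fin p → ℝ => U.mulVec (U.transpose.mulVec w) := hUm.comp hUtm
  have hP : γ.map (fun w => U.mulVec (U.transpose.mulVec w)) = P := by
    rw [← Function.comp_def (fun z => U.mulVec z), ← Measure.map_map hUm hUtm,
      map_transpose_mulVec_gaussian U hU]
    rfl
  have hpi : (Measure.pi fun _ : Fin n => P) =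
      (Measure.pi fun _ : Fin n => Measure.pi fun _ : Fin d => gaussianReal 0 1).map
        fun z i => U.mulVec (z i) :=
    (Measure.pi_map_pi fun _ => hUm.aemeasurable).symm
  let Φ : (Fin n → Fin d → ℝ) → Fin n → Fin p → ℝ := fun z i => U.mulVec (z i)
  have hΦ : Measurable Φ := measurable_pi_lambda _ fun i => hUm.comp (measurable_pi_apply i)
  have hΦγ : Measurable (Prod.map Φ (id : (Fin p → ℝ) → _)) := hΦ.prodMap measurable_id
  have hprod : (Measure.pi fun _ : Fin n => P).prod γ =
      ((Measure.pi fun _ : Fin n => Measure.pi fun _ : Fin d => gaussianReal 0 1).prod γ).map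
        (Prod.map Φ id) := by
    rw [hpi, ← Measure.map_prod_map _ _ hΦ measurable_id, Measure.map_id]
  let g : (Fin n → Fin p → ℝ) × (Fin p → ℝ) → (Fin p → ℝ) × (Fin n → Fin p → ℝ) :=
    fun x => (U.mulVec (U.transpose.mulVec x.2), x.1)
  have hg : Measurable g := (hUU.comp measurable_snd).prodMk measurable_fst
  have hfg : f ∘ Prod.map Φ id =ᵐ[(Measure.pi fun _ : Fin n =>
      Measure.pi fun _ : Fin d => gaussianReal 0 1).prod γ] (e.symm ∘ g) ∘ Prod.map Φ id := by
    have hae := ae_linearIndependent_castLE _ (gaussianPi_absolutelyContinuous d) hn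
    filter_upwards [Measure.quasiMeasurePreserving_fst.ae hae] with x hx
    have hMx : M (Φ x.1) = U * (Matrix.of fun i : Fin d => x.1 (Fin.castLE hn i)).transpose := by
      ext k i
      simp [M, Φ, Matrix.mul_apply, Matrix.mulVec, dotProduct]
    have hunit : IsUnit (Matrix.of fun i : Fin d => x.1 (Fin.castLE hn i)).transpose := by
      rw [Matrix.isUnit_transpose]
      exact Matrix.linearIndependent_rows_iff_isUnit.1 hx
    simp [f, g, hMx, columnProj_mul hU hunit]
  have hgP : ((Measure.pi fun _ : Fin n => P).prod γ).map g =
      P.prod (Measure.pi fun _ : Fin n => P) := by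
    have : g = Prod.map (fun w => U.mulVec (U.transpose.mulVec w)) id ∘ Prod.swap := rfl
    rw [this, ← Measure.map_map (hUU.prodMap measurable_id) measurable_swap,
      Measure.prod_swap, ← Measure.map_prod_map _ _ hUU measurable_id, Measure.map_id]
    exact congrArg (fun ν : Measure _ => ν.prod _) hP
  have hlast := (measurePreserving_piFinSuccAbove (fun _ : Fin (n + 1) => P)
    (Fin.last n)).symm.map_eq
  rw [hbind, hprod, Measure.map_map hf hΦγ, Measure.map_congr hfg,
    ← Measure.map_map (e.symm.measurable.comp hg) hΦγ, ← hprod,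
    ← Measure.map_map e.symm.measurable hg, hgP, hlast]

/-- Restriction of a vector to its first `d` coordinates. -/
def headCoords {p d : ℕ} (hp : d + 1 ≤ p) : (Fin p → ℝ) →ₗ[ℝ] (Fin d → ℝ) :=
  LinearMap.funLeft ℝ ℝ (Fin.castLE (by omega))

/-- The embedding `w ↦ (w, ⟨a, w⟩, 0, …, 0)`. -/
def graphEmb (p : ℕ) {d : ℕ} (a : Fin d → ℝ) : (Fin d → ℝ) →ₗ[ℝ] (Fin p → ℝ) where
  toFun w k := if h : k.1 < d then w ⟨k, h⟩ else if k.1 = d then a ⬝ᵥ w else 0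
  map_add' v w := by
    ext k
    simp only [Pi.add_apply]
    split_ifs <;> simp
  map_smul' c w := by
    ext k
    simp only [Pi.smul_apply, RingHom.id_apply]
    split_ifs <;> simp

theorem headCoords_graphEmb {p d : ℕ} (hp : d + 1 ≤ p) (a w : Fin d → ℝ) :
    headCoords hp (graphEmb p a w) = w := by
  ext i
  simp [headCoords, graphEmb, LinearMap.funLeft]

theorem graphEmb_injective {p d : ℕ} (hp : d + 1 ≤ p) (a : Fin d → ℝ) :
    Function.Injective (graphEmb p a) :=
  Function.LeftInverse.injective (headCoords_graphEmb hp a)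

theorem graphEmb_eq_of_mem_range {p d : ℕ} (hp : d + 1 ≤ p) {a : Fin d → ℝ} {x : Fin p → ℝ}
    (hx : x ∈ LinearMap.range (graphEmb p a)) : graphEmb p a (headCoords hp x) = x := by
  obtain ⟨w, rfl⟩ := hx
  rw [headCoords_graphEmb]

theorem graphEmb_apply_last {p d : ℕ} (hp : d + 1 ≤ p) (a w : Fin d → ℝ) :
    graphEmb p a w ⟨d, by omega⟩ = a ⬝ᵥ w := by
  simp [graphEmb]

theorem graphEmb_add_of_dotProduct_eq_zero (p : ℕ) {d : ℕ} {a b w : Fin d → ℝ} (h : b ⬝ᵥ w = 0) :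
    graphEmb p (a + b) w = graphEmb p a w := by
  ext k
  simp [graphEmb, add_dotProduct, h]

theorem continuous_graphEmb (p : ℕ) {d : ℕ} {α : Type*} [TopologicalSpace α]
    {a w : α → Fin d → ℝ} (ha : Continuous a) (hw : Continuous w) :
    Continuous fun x => graphEmb p (a x) (w x) := by
  refine continuous_pi fun k => ?_
  simp only [graphEmb, LinearMap.coe_mk, AddHom.coe_mk]
  split_ifs
  · fun_prop
  · exact ha.dotProduct hw
  · fun_prop

/-- Linearly independent configurations in the range of `graphEmb p a`. -/
def graphConfig (p : ℕ) {d : ℕ} (m : ℕ) (a : Fin d → ℝ) : Set (Fin m → Fin p → ℝ) :=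
  {y | LinearIndependent ℝ y ∧ ∀ j, y j ∈ LinearMap.range (graphEmb p a)}

theorem measurableSet_graphConfig_prod {p d : ℕ} (hp : d + 1 ≤ p) (m : ℕ) :
    MeasurableSet {x : (Fin d → ℝ) × (Fin m → Fin p → ℝ) | x.2 ∈ graphConfig p m x.1} := by
  have heq : {x : (Fin d → ℝ) × (Fin m → Fin p → ℝ) | x.2 ∈ graphConfig p m x.1} =
      {x | LinearIndependent ℝ x.2} ∩
        ⋂ j, {x | graphEmb p x.1 (headCoords hp (x.2 j)) = x.2 j} := by
    ext x
    simp only [graphConfig, Set.mem_ofPred_eq, Set.mem_inter_iff, Set.mem_iInter]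
    refine and_congr_right fun _ => forall_congr' fun j => ⟨graphEmb_eq_of_mem_range hp, ?_⟩
    exact fun h => ⟨_, h⟩
  rw [heq]
  refine MeasurableSet.inter ?_ (MeasurableSet.iInter fun j => ?_)
  · exact isOpen_setOfPred_linearIndependent.measurableSet.preimage measurable_snd
  · have hc : Continuous fun x : (Fin d → ℝ) × (Fin m → Fin p → ℝ) => x.2 j :=
      (continuous_apply j).comp continuous_snd
    exact (isClosed_eq (continuous_graphEmb p continuous_fst
      ((headCoords hp).continuous_of_finiteDimensional.comp hc)) hc).measurableSet

/-- Fix `m` vectors `y` and fewer than `m` rows `W`. For almost every `g` in the kernel of `W`,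
the vectors `y` are not an independent configuration in the graph of `a + g`. -/
theorem measure_setOf_mem_graphConfig_add {p d n m : ℕ} (hp : d + 1 ≤ p) (hnm : n < m)
    (W : Matrix (Fin n) (Fin d) ℝ) (a : Fin d → ℝ) (y : Fin m → Fin p → ℝ) :
    (Measure.addHaar : Measure (LinearMap.ker W.mulVecLin))
      {g | y ∈ graphConfig p m (a + g.1)} = 0 := by
  rcases Set.eq_empty_or_nonempty
    {g : LinearMap.ker W.mulVecLin | y ∈ graphConfig p m (a + g.1)} with h | ⟨g₀, hli, hr⟩
  · rw [h, measure_empty]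
  set u : Fin m → Fin d → ℝ := fun j => headCoords hp (y j)
  have hyu : ∀ j, graphEmb p (a + g₀.1) (u j) = y j := fun j => graphEmb_eq_of_mem_range hp (hr j)
  have hliu : LinearIndependent ℝ u := by
    refine LinearIndependent.of_comp (graphEmb p (a + g₀.1)) ?_
    convert hli
    ext1 j
    exact hyu j
  let φ : Fin m → (LinearMap.ker W.mulVecLin →ₗ[ℝ] ℝ) := fun j =>
    (dotProductBilin ℝ ℝ (u j)).comp (Submodule.subtype _)
  have hφ : ∀ j g, φ j g = u j ⬝ᵥ (g : Fin d → ℝ) := fun j g => rfl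
  obtain ⟨j, hj⟩ : ∃ j, φ j ≠ 0 := by
    by_contra! hall
    have hle : LinearMap.ker W.mulVecLin ≤ LinearMap.ker (Matrix.of u).mulVecLin := by
      intro g hg
      rw [LinearMap.mem_ker]
      ext j
      exact DFunLike.congr_fun (hall j) ⟨g, hg⟩
    have h1 := Submodule.finrank_mono hle
    have h2 := W.mulVecLin.finrank_range_add_finrank_ker
    have h3 := (Matrix.of u).mulVecLin.finrank_range_add_finrank_ker
    have h4 : (Matrix.of u).rank = m := by
      simpa using LinearIndependent.rank_matrix (M := Matrix.of u) hliu
    have h5 : W.rank ≤ n := W.rank_le_height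
    rw [Matrix.rank] at h4 h5
    omega
  have hsub : {g : LinearMap.ker W.mulVecLin | y ∈ graphConfig p m (a + g.1)} ⊆
      (AffineSubspace.mk' g₀ (LinearMap.ker (φ j)) : Set (LinearMap.ker W.mulVecLin)) := by
    rintro g ⟨-, hg⟩
    have h1 : (a + g.1) ⬝ᵥ u j = (a + g₀.1) ⬝ᵥ u j := by
      rw [← graphEmb_apply_last hp, ← graphEmb_apply_last hp, hyu j,
        graphEmb_eq_of_mem_range hp (hg j)]
    rw [add_dotProduct, add_dotProduct, add_right_inj] at h1
    rw [SetLike.mem_coe, AffineSubspace.mem_mk', LinearMap.mem_ker, vsub_eq_sub, map_sub, hφ, hφ,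
      dotProduct_comm, h1, dotProduct_comm, sub_self]
  refine measure_mono_null hsub (Measure.addHaar_affineSubspace _ _ fun htop => hj ?_)
  have := congrArg AffineSubspace.direction htop
  rwa [AffineSubspace.direction_mk', AffineSubspace.direction_top, LinearMap.ker_eq_top] at this

theorem measurable_kernel_graphConfig {p d n m : ℕ} (hp : d + 1 ≤ p)
    (T : Kernel (Fin n → Fin p → ℝ) (Fin m → Fin p → ℝ)) [IsSFiniteKernel T]
    {α : Type*} [TopologicalSpace α] [MeasurableSpace α] [OpensMeasurableSpace α]
    {W : α → Fin n → Fin d → ℝ} {a b : α → Fin d → ℝ} (hW : Continuous W) (ha : Continuous a)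
    (hb : Measurable b) :
    Measurable fun x => T (fun i => graphEmb p (a x) (W x i)) (graphConfig p m (b x)) := by
  have hφ : Measurable fun x i => graphEmb p (a x) (W x i) :=
    (continuous_pi fun i => continuous_graphEmb p ha
      ((continuous_apply i).comp hW)).measurable
  exact Kernel.measurable_kernel_prodMk_left (κ := T.comap _ hφ)
    (t := {x | x.2 ∈ graphConfig p m (b x.1)})
    ((measurableSet_graphConfig_prod hp m).preimage
      ((hb.comp measurable_fst).prodMk measurable_snd))

theorem ae_kernel_graphConfig_eq_zero {p d n m : ℕ} (hp : d + 1 ≤ p) (hnm : n < m)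
    (T : Kernel (Fin n → Fin p → ℝ) (Fin m → Fin p → ℝ)) [IsMarkovKernel T]
    (W : Fin n → Fin d → ℝ) :
    ∀ᵐ a, T (fun i => graphEmb p a (W i)) (graphConfig p m a) = 0 := by
  let K := LinearMap.ker (Matrix.of W).mulVecLin
  let f : (Fin d → ℝ) → (Fin d → ℝ) → ℝ≥0∞ := fun a b =>
    T (fun i => graphEmb p a (W i)) (graphConfig p m b)
  have hinv : ∀ a b (g : K), f (a + g.1) b = f a b := by
    intro a b g
    have : ∀ i, graphEmb p (a + g.1) (W i) = graphEmb p a (W i) := fun i =>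
      graphEmb_add_of_dotProduct_eq_zero p (by
        rw [dotProduct_comm]; exact congrFun (LinearMap.mem_ker.1 g.2) i)
    simp [f, this]
  have hae : ∀ a, ∀ᵐ g ∂(Measure.addHaar : Measure K), f a (a + g.1) = 0 := by
    intro a
    set τ := T (fun i => graphEmb p a (W i))
    have hS : MeasurableSet {x : K × (Fin m → Fin p → ℝ) | x.2 ∈ graphConfig p m (a + x.1.1)} :=
      (measurableSet_graphConfig_prod hp m).preimage
        (((measurable_subtype_coe.comp measurable_fst).const_add a).prodMk measurable_snd)
    have hS' : ∀ᵐ y ∂τ, ∀ᵐ g ∂(Measure.addHaar : Measure K), y ∉ graphConfig p m (a + g.1) :=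
      Filter.Eventually.of_forall fun y => by
        rw [ae_iff]
        simpa using measure_setOf_mem_graphConfig_add hp hnm (Matrix.of W) a y
    have := (Measure.ae_ae_comm (μ := (Measure.addHaar : Measure K)) (ν := τ)
      (p := fun g y => y ∉ graphConfig p m (a + g.1)) hS.compl).2 hS'
    filter_upwards [this] with g hg
    rw [ae_iff] at hg
    simpa using hg
  have hf : Measurable fun x : K × (Fin d → ℝ) => f x.2 (x.2 + x.1.1) :=
    measurable_kernel_graphConfig hp T (W := fun _ => W) continuous_const continuous_snd
      (measurable_snd.add (measurable_subtype_coe.comp measurable_fst))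
  have hmeas : MeasurableSet {x : K × (Fin d → ℝ) | f x.2 (x.2 + x.1.1) = 0} :=
    hf (measurableSet_singleton 0)
  have hswap := (Measure.ae_ae_comm (μ := (Measure.addHaar : Measure K)) (ν := volume)
    (p := fun g a => f a (a + g.1) = 0) hmeas).2 (Filter.Eventually.of_forall hae)
  obtain ⟨g, hg⟩ := hswap.exists
  have hshift := (measurePreserving_sub_right (volume : Measure (Fin d → ℝ))
    g.1).quasiMeasurePreserving.ae hg
  filter_upwards [hshift] with a ha
  rw [sub_add_cancel] at ha
  rw [← hinv (a - g.1) a g, sub_add_cancel] at ha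
  exact ha

theorem exists_graph_ae_kernel_eq_zero {p d n m : ℕ} (hp : d + 1 ≤ p) (hnm : n < m)
    (T : Kernel (Fin n → Fin p → ℝ) (Fin m → Fin p → ℝ)) [IsMarkovKernel T] :
    ∃ a : Fin d → ℝ, ∀ᵐ W ∂(Measure.pi fun _ : Fin n => (volume : Measure (Fin d → ℝ))),
      T (fun i => graphEmb p a (W i)) (graphConfig p m a) = 0 := by
  let F : (Fin d → ℝ) → (Fin n → Fin d → ℝ) → ℝ≥0∞ := fun a W =>
    T (fun i => graphEmb p a (W i)) (graphConfig p m a)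
  have hF : Measurable (Function.uncurry F) :=
    measurable_kernel_graphConfig hp T continuous_snd continuous_fst measurable_fst
  have hW : ∀ W, ∀ᵐ a, F a W = 0 := ae_kernel_graphConfig_eq_zero hp hnm T
  have hswap : ∀ᵐ a, ∀ᵐ W ∂(Measure.pi fun _ : Fin n => (volume : Measure (Fin d → ℝ))),
      F a W = 0 :=
    (Measure.ae_ae_comm (p := fun a W => F a W = 0) (hF (measurableSet_singleton 0))).2
      (Filter.Eventually.of_forall hW)
  exact hswap.exists

theorem exists_orthonormal_columns_range_le {p d : ℕ} (H : Submodule ℝ (Fin p → ℝ))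
    (hH : Module.finrank ℝ H = d) :
    ∃ U : Matrix (Fin p) (Fin d) ℝ, U.transpose * U = 1 ∧ ∀ z, U.mulVec z ∈ H := by
  let e := (WithLp.linearEquiv 2 ℝ (Fin p → ℝ)).symm
  let H' : Submodule ℝ (EuclideanSpace ℝ (Fin p)) := H.map e.toLinearMap
  have hH' : Module.finrank ℝ H' = d := by
    rw [← hH]
    exact LinearEquiv.finrank_map_eq e H
  let b := (stdOrthonormalBasis ℝ H').reindex (finCongr hH')
  have hmem : ∀ i, (b i : EuclideanSpace ℝ (Fin p)).ofLp ∈ H := by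
    intro i
    obtain ⟨x, hx, hxb⟩ := (b i).2
    rw [← hxb]
    exact hx
  refine ⟨Matrix.of fun k i => (b i : EuclideanSpace ℝ (Fin p)) k, ?_, fun z => ?_⟩
  · ext i j
    have := orthonormal_iff_ite.1 b.orthonormal i j
    rw [Submodule.coe_inner, EuclideanSpace.inner_eq_star_dotProduct] at this
    rw [Matrix.mul_apply, Matrix.one_apply, ← this]
    simp [dotProduct, mul_comm]
  · rw [Matrix.mulVec_eq_sum]
    refine Submodule.sum_mem _ fun i _ => ?_
    rw [op_smul_eq_smul]
    exact H.smul_mem (z i) (hmem i)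

theorem exists_lowRankGaussian_graph {p d n m : ℕ} (hp : d + 1 ≤ p) (hm : m ≤ d)
    (a : Fin d → ℝ) :
    ∃ U : Matrix (Fin p) (Fin d) ℝ, U.transpose * U = 1 ∧
      (Measure.pi fun _ : Fin m => lowRankGaussian p d U) (graphConfig p m a) = 1 ∧
      ∀ q : (Fin n → Fin p → ℝ) → Prop, MeasurableSet {x | q x} →
        (∀ᵐ W ∂(Measure.pi fun _ : Fin n => (volume : Measure (Fin d → ℝ))),
          q fun i => graphEmb p a (W i)) →
        ∀ᵐ x ∂(Measure.pi fun _ : Fin n => lowRankGaussian p d U), q x := by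
  have hrank : Module.finrank ℝ (LinearMap.range (graphEmb p a)) = d := by
    rw [LinearMap.finrank_range_of_inj (graphEmb_injective hp a)]
    simp
  obtain ⟨U, hU, hUr⟩ := exists_orthonormal_columns_range_le _ hrank
  have hinjU : Function.Injective U.mulVec := by
    intro z w h
    simpa [hU] using congrArg U.transpose.mulVec h
  let B : (Fin d → ℝ) →ₗ[ℝ] (Fin d → ℝ) := (headCoords hp).comp U.mulVecLin
  have hB : ∀ z, graphEmb p a (B z) = U.mulVec z := fun z => graphEmb_eq_of_mem_range hp (hUr z)
  have hBinj : Function.Injective B := fun z w h => hinjU (by rw [← hB, ← hB, h])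
  have hdet : LinearMap.det B ≠ 0 :=
    (LinearEquiv.isUnit_det' (LinearEquiv.ofInjectiveEndo B hBinj)).ne_zero
  set γ : Measure (Fin d → ℝ) := Measure.pi fun _ => gaussianReal 0 1
  have hγ : γ ≪ volume := gaussianPi_absolutelyContinuous d
  have hBm : Measurable B := B.continuous_of_finiteDimensional.measurable
  have hUm : Measurable fun z : Fin d → ℝ => U.mulVec z :=
    (Continuous.matrix_mulVec continuous_const continuous_id).measurable
  have hpi : ∀ k, (Measure.pi fun _ : Fin k => lowRankGaussian p d U) =
      (Measure.pi fun _ : Fin k => γ).map fun z i => U.mulVec (z i) := fun k =>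
    (Measure.pi_map_pi fun _ => hUm.aemeasurable).symm
  have hΦ : ∀ k, Measurable fun (z : Fin k → Fin d → ℝ) i => U.mulVec (z i) := fun k =>
    measurable_pi_lambda _ fun i => hUm.comp (measurable_pi_apply i)
  have hA : MeasurableSet (graphConfig p m a) :=
    (measurableSet_graphConfig_prod hp m).preimage measurable_prodMk_left
  refine ⟨U, hU, ?_, fun q hq hW => ?_⟩
  · rw [← mem_ae_iff_prob_eq_one hA, hpi, mem_ae_map_iff (hΦ m).aemeasurable hA]
    filter_upwards [(hγ.pi_fin m).ae_le (ae_linearIndependent_volume hm)] with z hz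
    exact ⟨hz.map' U.mulVecLin (LinearMap.ker_eq_bot.2 hinjU), fun j => hUr (z j)⟩
  · have hBγ : γ.map B ≪ volume :=
      (hγ.map hBm).trans (Measure.LinearMap.quasiMeasurePreserving volume B hdet).absolutelyContinuous
    have : IsProbabilityMeasure (γ.map B) := Measure.isProbabilityMeasure_map hBm.aemeasurable
    have hW' := (hBγ.pi_fin n).ae_le hW
    rw [← Measure.pi_map_pi fun _ => hBm.aemeasurable] at hW'
    have hBpi : AEMeasurable (fun (z : Fin n → Fin d → ℝ) i => B (z i))
        (Measure.pi fun _ => γ) :=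
      (measurable_pi_lambda _ fun i => hBm.comp (measurable_pi_apply i)).aemeasurable
    have hW'' := ae_of_ae_map hBpi hW'
    rw [hpi, ae_map_iff (hΦ n).aemeasurable hq]
    filter_upwards [hW''] with z hz
    simpa only [hB] using hz

/-- Low-rank covariance model: amplification is as hard as learning.
For `p ≥ d + 1`, consider the class of all `N(0, UUᵀ)` with `U ∈ ℝ^{p×d}`,
`UᵀU = I_d`.  Then: (i) if `n ≥ d` a perfect `(n, n+1)` amplification exists,
`ε*(𝒫, n, 1) = 0`; and (ii) if `n < d` then `ε*(𝒫, n, 1) = 1`. -/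
theorem lowRankGaussian_amplification (p d : ℕ) (hd : 1 ≤ d) (hp : d + 1 ≤ p)
    (n : ℕ) (hn : 1 ≤ n) :
    (d ≤ n →
      ampErr (fun U : {U : Matrix (Fin p) (Fin d) ℝ // U.transpose * U = 1} =>
        lowRankGaussian p d U.1) n 1 = 0) ∧
    (n < d →
      ampErr (fun U : {U : Matrix (Fin p) (Fin d) ℝ // U.transpose * U = 1} =>
        lowRankGaussian p d U.1) n 1 = 1) := by
  refine ⟨fun hdn => ?_, fun hnd => ?_⟩
  · obtain ⟨T, hT, hTU⟩ := exists_perfect_amplification (p := p) hdn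
    exact ampErr_eq_zero _ n 1 T fun U => hTU U.1 U.2
  · refine ampErr_eq_one _ n 1 fun T hT => ?_
    obtain ⟨a, ha⟩ := exists_graph_ae_kernel_eq_zero hp (Nat.lt_succ_self n) T
    obtain ⟨U, hU, h1, h0⟩ := exists_lowRankGaussian_graph (n := n) hp hnd a
    have hA : MeasurableSet (graphConfig p (n + 1) a) :=
      (measurableSet_graphConfig_prod hp (n + 1)).preimage measurable_prodMk_left
    refine ⟨⟨U, hU⟩, graphConfig p (n + 1) a, hA, h1, ?_⟩
    rw [Measure.bind_apply hA T.aemeasurable, lintegral_eq_zero_iff (T.measurable_coe hA)]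
    exact h0 (fun x => T x (graphConfig p (n + 1) a) = 0)
      (T.measurable_coe hA (measurableSet_singleton 0)) ha
end
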